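/- Let S and A be nonempty finite types, P : S → A → PMF S a transition kernel, ρ0 a probability distribution on S, and γ ∈ [0,1). Let R : S × A → ℝ be a reward function, π and π' policies with π(a|s) > 0 for all s, a, and f : S → ℝ any function. Define T_{π,f}(π') = Σ_s d^π(s) Σ_a π(a|s) Σ_{s'} P(s'|s,a) (π'(a|s)/π(a|s) − 1)(R(s,a) + γ f(s') − f(s)) and ε_f^{π'} = max_s |Σ_a π'(a|s) Σ_{s'} P(s'|s,a) (R(s,a) + γ f(s') − f(s))|. Then J_R(π') − J_R(π) ≥ (1/(1−γ)) (T_{π,f}(π') − 2 ε_f^{π'} D_TV(d^{π'}‖d^π)), where D_TV(d^{π'}‖d^π) = (1/2) Σ_s |d^{π'}(s) − d^π(s)|. -/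

import Mathlib

open scoped BigOperators

section MDPdefs

variable {S A : Type*} [Fintype S] [Fintype A]

/-- The state-marginal distribution at time `t` under policy `π`:
`ρ_0 = ρ0` and `ρ_{t+1}(s') = ∑_s ∑_a ρ_t(s) π(a|s) P(s'|s,a)`. -/
noncomputable def stateMarginal (P : S → A → PMF S) (ρ0 : PMF S) (π : S → PMF A) :
    ℕ → S → ℝ
  | 0, s => (ρ0 s).toReal
  | t + 1, s' => ∑ s : S, ∑ a : A,
      stateMarginal P ρ0 π t s * (π s a).toReal * (P s a s').toReal

/-- The discounted state visitation distribution `d^π(s) = (1-γ) ∑_t γ^t ρ_t^π(s)`. -/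
noncomputable def dVisit (P : S → A → PMF S) (ρ0 : PMF S) (γ : ℝ) (π : S → PMF A)
    (s : S) : ℝ :=
  (1 - γ) * ∑' t : ℕ, γ ^ t * stateMarginal P ρ0 π t s

/-- The discounted return `J_R(π) = ∑_t γ^t ∑_s ∑_a ρ_t^π(s) π(a|s) R(s,a)`. -/
noncomputable def Jret (P : S → A → PMF S) (ρ0 : PMF S) (γ : ℝ) (π : S → PMF A)
    (R : S → A → ℝ) : ℝ :=
  ∑' t : ℕ, γ ^ t * ∑ s : S, ∑ a : A,
      stateMarginal P ρ0 π t s * (π s a).toReal * R s a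

/-- Total variational divergence between the action distributions of two policies at `s`. -/
noncomputable def dTV (π' π : S → PMF A) (s : S) : ℝ :=
  (1 / 2) * ∑ a : A, |(π' s a).toReal - (π s a).toReal|

/-- Value function of `π` with reward `R`: expected discounted return started at `s`. -/
noncomputable def Vval (P : S → A → PMF S) (γ : ℝ) (π : S → PMF A) (R : S → A → ℝ)
    (s : S) : ℝ :=
  Jret P (PMF.pure s) γ π R

/-- State-action value function `Q^π_R(s,a) = R(s,a) + γ ∑_{s'} P(s'|s,a) V^π_R(s')`. -/
noncomputable def Qval (P : S → A → PMF S) (γ : ℝ) (π : S → PMF A) (R : S → A → ℝ)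
    (s : S) (a : A) : ℝ :=
  R s a + γ * ∑ s' : S, (P s a s').toReal * Vval P γ π R s'

/-- Advantage function `A^π_R(s,a) = Q^π_R(s,a) - V^π_R(s)`. -/
noncomputable def Aadv (P : S → A → PMF S) (γ : ℝ) (π : S → PMF A) (R : S → A → ℝ)
    (s : S) (a : A) : ℝ :=
  Qval P γ π R s a - Vval P γ π R s

/-- Kullback–Leibler divergence between the action distributions at state `s`. -/
noncomputable def dKL (π' π : S → PMF A) (s : S) : ℝ :=
  ∑ a : A, (π' s a).toReal * Real.log ((π' s a).toReal / (π s a).toReal)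

end MDPdefs

theorem pmf_sum_toReal {α : Type*} [Fintype α] (p : PMF α) : ∑ a, (p a).toReal = 1 := by
  rw [← ENNReal.toReal_sum (fun a _ => p.apply_ne_top a), ← tsum_fintype (L := .unconditional α), p.tsum_coe]
  simp

theorem sm_nonneg {S A : Type*} [Fintype S] [Fintype A]
    (P : S → A → PMF S) (ρ0 : PMF S) (π : S → PMF A) (t : ℕ) :
    ∀ s, 0 ≤ stateMarginal P ρ0 π t s := by
  induction t with
  | zero => intro s; simp [stateMarginal]
  | succ t ih =>
    intro s
    rw [stateMarginal]
    exact Finset.sum_nonneg fun x _ => Finset.sum_nonneg fun a _ =>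
      mul_nonneg (mul_nonneg (ih x) ENNReal.toReal_nonneg) ENNReal.toReal_nonneg

theorem sm_sum {S A : Type*} [Fintype S] [Fintype A]
    (P : S → A → PMF S) (ρ0 : PMF S) (π : S → PMF A) (t : ℕ) :
    ∑ s, stateMarginal P ρ0 π t s = 1 := by
  induction t with
  | zero => simpa [stateMarginal] using pmf_sum_toReal ρ0
  | succ t ih =>
    simp only [stateMarginal]
    rw [Finset.sum_comm, ← ih]
    refine Finset.sum_congr rfl fun s _ => ?_
    rw [Finset.sum_comm]
    simp only [← Finset.mul_sum, pmf_sum_toReal, mul_one]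

theorem sm_summable {S A : Type*} [Fintype S] [Fintype A]
    (P : S → A → PMF S) (ρ0 : PMF S) (γ : ℝ) (hγ0 : 0 ≤ γ) (hγ1 : γ < 1)
    (π : S → PMF A) (s : S) :
    Summable fun t : ℕ => γ ^ t * stateMarginal P ρ0 π t s := by
  refine Summable.of_nonneg_of_le (fun t => mul_nonneg (pow_nonneg hγ0 t) (sm_nonneg P ρ0 π t s))
    (fun t => ?_) (summable_geometric_of_lt_one hγ0 hγ1)
  have h : stateMarginal P ρ0 π t s ≤ 1 := by
    rw [← sm_sum P ρ0 π t]
    exact Finset.single_le_sum (fun x _ => sm_nonneg P ρ0 π t x) (Finset.mem_univ s)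
  exact mul_le_of_le_one_right (pow_nonneg hγ0 t) h

theorem dVisit_sum {S A : Type*} [Fintype S] [Fintype A]
    (P : S → A → PMF S) (ρ0 : PMF S) (γ : ℝ) (hγ0 : 0 ≤ γ) (hγ1 : γ < 1)
    (π : S → PMF A) (g : S → ℝ) :
    HasSum (fun t : ℕ => (1 - γ) * (γ ^ t * ∑ s, stateMarginal P ρ0 π t s * g s))
      (∑ s, dVisit P ρ0 γ π s * g s) := by
  have h : ∀ s ∈ (Finset.univ : Finset S),
      HasSum (fun t : ℕ => (1 - γ) * (γ ^ t * stateMarginal P ρ0 π t s) * g s)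
        (dVisit P ρ0 γ π s * g s) := fun s _ =>
    (((sm_summable P ρ0 γ hγ0 hγ1 π s).hasSum).mul_left (1 - γ)).mul_right (g s)
  convert hasSum_sum h using 2 with t
  rw [Finset.mul_sum, Finset.mul_sum]
  exact Finset.sum_congr rfl fun s _ => by ring

theorem dVisit_Jret {S A : Type*} [Fintype S] [Fintype A]
    (P : S → A → PMF S) (ρ0 : PMF S) (γ : ℝ) (hγ0 : 0 ≤ γ) (hγ1 : γ < 1)
    (π : S → PMF A) (R : S → A → ℝ) :
    ∑ s, dVisit P ρ0 γ π s * ∑ a, (π s a).toReal * R s a = (1 - γ) * Jret P ρ0 γ π R := by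
  rw [← (dVisit_sum P ρ0 γ hγ0 hγ1 π _).tsum_eq, tsum_mul_left, Jret]
  simp only [Finset.mul_sum, mul_assoc]

theorem dVisit_flow {S A : Type*} [Fintype S] [Fintype A]
    (P : S → A → PMF S) (ρ0 : PMF S) (γ : ℝ) (hγ0 : 0 ≤ γ) (hγ1 : γ < 1)
    (π : S → PMF A) (f : S → ℝ) :
    ∑ s, dVisit P ρ0 γ π s * f s = (1 - γ) * ∑ s, (ρ0 s).toReal * f s +
      γ * ∑ s, dVisit P ρ0 γ π s * ∑ a, (π s a).toReal * ∑ s', (P s a s').toReal * f s' := by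
  have h1 := dVisit_sum P ρ0 γ hγ0 hγ1 π f
  have h2 := (dVisit_sum P ρ0 γ hγ0 hγ1 π
    (fun s => ∑ a, (π s a).toReal * ∑ s', (P s a s').toReal * f s')).mul_left γ
  have h3 : ∀ t, ∑ s, stateMarginal P ρ0 π (t+1) s * f s = ∑ s, stateMarginal P ρ0 π t s *
      ∑ a, (π s a).toReal * ∑ s', (P s a s').toReal * f s' := by
    intro t
    simp only [stateMarginal, Finset.sum_mul, Finset.mul_sum]
    rw [Finset.sum_comm]
    refine Finset.sum_congr rfl fun s _ => ?_
    rw [Finset.sum_comm]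
    simp only [mul_assoc]
  rw [← h1.tsum_eq, h1.summable.tsum_eq_zero_add, ← h2.tsum_eq]
  congr 1
  · simp [stateMarginal]
  · refine tsum_congr fun t => ?_
    rw [h3]; ring

theorem dVisit_delta {S A : Type*} [Fintype S] [Fintype A]
    (P : S → A → PMF S) (ρ0 : PMF S) (γ : ℝ) (hγ0 : 0 ≤ γ) (hγ1 : γ < 1)
    (π : S → PMF A) (R : S → A → ℝ) (f : S → ℝ) :
    ∑ s, dVisit P ρ0 γ π s *
      ∑ a, (π s a).toReal * ∑ s', (P s a s').toReal * (R s a + γ * f s' - f s)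
      = (1 - γ) * Jret P ρ0 γ π R - (1 - γ) * ∑ s, (ρ0 s).toReal * f s := by
  have h1 := dVisit_Jret P ρ0 γ hγ0 hγ1 π R
  have h2 := dVisit_flow P ρ0 γ hγ0 hγ1 π f
  have h3 : ∀ s, ∑ a, (π s a).toReal * ∑ s', (P s a s').toReal * (R s a + γ * f s' - f s)
      = ∑ a, (π s a).toReal * R s a
        + γ * (∑ a, (π s a).toReal * ∑ s', (P s a s').toReal * f s') - f s := by
    intro s
    have h4 : ∀ a, ∑ s', (P s a s').toReal * (R s a + γ * f s' - f s)
        = R s a + γ * (∑ s', (P s a s').toReal * f s') - f s := by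
      intro a
      have : ∀ s', (P s a s').toReal * (R s a + γ * f s' - f s) =
        (P s a s').toReal * (R s a - f s) + γ * ((P s a s').toReal * f s') := fun s' => by ring
      simp only [this, Finset.sum_add_distrib, ← Finset.sum_mul, ← Finset.mul_sum,
        pmf_sum_toReal]
      ring
    have h5 : ∀ a, (π s a).toReal * (R s a + γ * (∑ s', (P s a s').toReal * f s') - f s)
        = (π s a).toReal * R s a + γ * ((π s a).toReal * ∑ s', (P s a s').toReal * f s')
          - (π s a).toReal * f s := fun a => by ring
    simp only [h4, h5, Finset.sum_add_distrib, Finset.sum_sub_distrib, ← Finset.sum_mul,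
      ← Finset.mul_sum, pmf_sum_toReal, one_mul]
  have h6 : ∀ s, dVisit P ρ0 γ π s * (∑ a, (π s a).toReal * R s a
        + γ * (∑ a, (π s a).toReal * ∑ s', (P s a s').toReal * f s') - f s)
      = dVisit P ρ0 γ π s * (∑ a, (π s a).toReal * R s a)
        + γ * (dVisit P ρ0 γ π s * ∑ a, (π s a).toReal * ∑ s', (P s a s').toReal * f s')
        - dVisit P ρ0 γ π s * f s := fun s => by ring
  simp only [h3, h6, Finset.sum_add_distrib, Finset.sum_sub_distrib]
  rw [← Finset.mul_sum, h1, h2]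
  ring

/-- Appendix Lemma 3 (lower bound): `J_R(π') − J_R(π) ≥
(T_{π,f}(π') − 2 ε_f^{π'} D_TV(d^{π'}‖d^π)) / (1−γ)`. -/
theorem tace_appendix_lemma_three_lower
    {S A : Type*} [Fintype S] [Fintype A] [Nonempty S] [Nonempty A]
    (P : S → A → PMF S) (ρ0 : PMF S) (γ : ℝ) (hγ0 : 0 ≤ γ) (hγ1 : γ < 1)
    (R : S → A → ℝ) (π π' : S → PMF A) (hπpos : ∀ s a, 0 < (π s a).toReal)
    (f : S → ℝ) :
    let Tf : ℝ := ∑ s : S, dVisit P ρ0 γ π s * ∑ a : A, (π s a).toReal *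
        ∑ s' : S, (P s a s').toReal *
          (((π' s a).toReal / (π s a).toReal - 1) * (R s a + γ * f s' - f s))
    let εf : ℝ := ⨆ s : S,
      |∑ a : A, (π' s a).toReal * ∑ s' : S, (P s a s').toReal * (R s a + γ * f s' - f s)|
    let dTVd : ℝ := (1 / 2) * ∑ s : S, |dVisit P ρ0 γ π' s - dVisit P ρ0 γ π s|
    Jret P ρ0 γ π' R - Jret P ρ0 γ π R ≥ (1 / (1 - γ)) * (Tf - 2 * εf * dTVd) := by
  intro Tf εf dTVd
  have h1 := dVisit_delta P ρ0 γ hγ0 hγ1 π R f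
  have h2 := dVisit_delta P ρ0 γ hγ0 hγ1 π' R f
  set D' : S → ℝ := fun s => ∑ a : A, (π' s a).toReal *
    ∑ s' : S, (P s a s').toReal * (R s a + γ * f s' - f s) with hD'
  set D : S → ℝ := fun s => ∑ a : A, (π s a).toReal *
    ∑ s' : S, (P s a s').toReal * (R s a + γ * f s' - f s) with hD
  change ∑ s, dVisit P ρ0 γ π s * D s = _ at h1
  change ∑ s, dVisit P ρ0 γ π' s * D' s = _ at h2
  have hT : Tf = ∑ s, dVisit P ρ0 γ π s * (D' s - D s) := by
    refine Finset.sum_congr rfl fun s _ => ?_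
    congr 1
    simp only [hD', hD]
    rw [← Finset.sum_sub_distrib]
    refine Finset.sum_congr rfl fun a _ => ?_
    have hp := (hπpos s a).ne'
    rw [← sub_mul, Finset.mul_sum, Finset.mul_sum]
    refine Finset.sum_congr rfl fun s' _ => ?_
    field_simp
  have hε : ∀ s, |D' s| ≤ εf := fun s =>
    le_ciSup (f := fun s => |D' s|) (Set.finite_range _).bddAbove s
  have hb : -(2 * εf * dTVd) ≤ ∑ s, (dVisit P ρ0 γ π' s - dVisit P ρ0 γ π s) * D' s := by
    have : 2 * εf * dTVd = ∑ s, |dVisit P ρ0 γ π' s - dVisit P ρ0 γ π s| * εf := by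
      rw [← Finset.sum_mul]
      simp only [dTVd]
      ring
    rw [this, ← Finset.sum_neg_distrib]
    refine Finset.sum_le_sum fun s _ => ?_
    have h3 := neg_abs_le ((dVisit P ρ0 γ π' s - dVisit P ρ0 γ π s) * D' s)
    rw [abs_mul] at h3
    have h4 := mul_le_mul_of_nonneg_left (hε s) (abs_nonneg (dVisit P ρ0 γ π' s - dVisit P ρ0 γ π s))
    linarith
  simp only [sub_mul, mul_sub, Finset.sum_sub_distrib] at hb hT
  have hpos : 0 < 1 - γ := by linarith
  rw [ge_iff_le, one_div, inv_mul_le_iff₀ hpos]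
  linarith
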